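/- Assume in addition that T is self-adjoint with respect to the weighted inner product, i.e. ∫ (T h₁)(q)·h₂(q)/f(q) dq = ∫ h₁(q)·(T h₂)(q)/f(q) dq for all measurable h₁, h₂ with finite weighted L² norms. Then for every measurable h : ℝ^m → ℝ with ∫ h²/f < ∞, the iterates of the HMC operator converge strongly to the target: ∫ (Tⁿ h(q) − α f(q))²/f(q) dq → 0 as n → ∞, where α = (∫ h dq)/(∫ f dq). -/

import Mathlib

open MeasureTheory Filter

/-- The HMC operator: lift `h` by the auxiliary density `g`, transport by the
Hamiltonian motion `R`, and project back on the position marginal. -/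
noncomputable def hmcOp (m : ℕ)
    (g : EuclideanSpace ℝ (Fin m) → ℝ)
    (R : EuclideanSpace ℝ (Fin m) × EuclideanSpace ℝ (Fin m) →
         EuclideanSpace ℝ (Fin m) × EuclideanSpace ℝ (Fin m)) :
    (EuclideanSpace ℝ (Fin m) → ℝ) → EuclideanSpace ℝ (Fin m) → ℝ :=
  fun h q => ∫ p, h (R (q, p)).1 * g (R (q, p)).2

/-!
Dividing by `f` turns the weighted space into `L²(π)` with `π = f dq`, and turns the HMC operator
into the Markov operator `φ ↦ 𝔼 φ(S(·, p))`, where `S` is the position after one motion and `p` has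
density `g`; the invariance of `f(q) g(p)` makes `π` stationary. This Markov operator is a
composition with `S` (an isometry) followed by a conditional expectation given `q`, hence a
contraction `T`, and `‖T φ‖ = ‖φ‖` forces `φ(S(q, p)) = T φ(q)` for almost all `q` and `p`. By
coverage such a `φ` is constant.

For a self-adjoint contraction, `⟪T^(2i) x, T^(2j) x⟫ = ‖T^(i+j) x‖²`, so the convergence of the
decreasing sequence `‖T^n x‖` makes the even iterates Cauchy. Their limit `y` satisfies `T² y = y`,
so `T` preserves its norm, `y` is constant and `T y = y`; the odd iterates then converge to `y` too.
The mean ergodic theorem identifies `y` as the orthogonal projection onto the constants.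
-/

open scoped InnerProductSpace InnerProduct Topology

section SelfAdjointContraction

variable {𝕜 H : Type*} [RCLike 𝕜] [NormedAddCommGroup H] [InnerProductSpace 𝕜 H]

theorem antitone_norm_pow_apply {T : H →L[𝕜] H} (hT : ‖T‖ ≤ 1) (x : H) :
    Antitone fun n => ‖(T ^ n) x‖ := by
  refine antitone_nat_of_succ_le fun n => ?_
  simpa only [pow_succ', mul_apply_eq_comp, one_mul] using T.le_of_opNorm_le hT ((T ^ n) x)

variable [CompleteSpace H] {T : H →L[𝕜] H}

theorem inner_pow_apply_pow_apply (hsa : IsSelfAdjoint T) (i j : ℕ) (x : H) :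
    ⟪(T ^ i) x, (T ^ j) x⟫_𝕜 = ⟪x, (T ^ (i + j)) x⟫_𝕜 := by
  rw [pow_add, ← ContinuousLinearMap.adjoint_inner_right, (hsa.pow i).adjoint_eq]
  rfl

theorem inner_pow_two_mul_apply (hsa : IsSelfAdjoint T) (i j : ℕ) (x : H) :
    ⟪(T ^ (2 * i)) x, (T ^ (2 * j)) x⟫_𝕜 = (‖(T ^ (i + j)) x‖ : 𝕜) ^ 2 := by
  rw [← inner_self_eq_norm_sq_to_K, inner_pow_apply_pow_apply hsa, inner_pow_apply_pow_apply hsa]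
  congr 3
  ring

theorem norm_pow_two_mul_sub_sq_le (hT : ‖T‖ ≤ 1) (hsa : IsSelfAdjoint T) {i j : ℕ}
    (hij : i ≤ j) (x : H) :
    ‖(T ^ (2 * j)) x - (T ^ (2 * i)) x‖ ^ 2 ≤ ‖(T ^ (2 * i)) x‖ ^ 2 - ‖(T ^ (2 * j)) x‖ ^ 2 := by
  have cross_ge : ‖(T ^ (2 * j)) x‖ ^ 2 ≤ ‖(T ^ (j + i)) x‖ ^ 2 :=
    pow_le_pow_left₀ (norm_nonneg _) (antitone_norm_pow_apply hT x (by lia)) 2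
  rw [norm_sub_sq (𝕜 := 𝕜), inner_pow_two_mul_apply hsa, ← RCLike.ofReal_pow, RCLike.ofReal_re]
  linarith

theorem cauchySeq_pow_two_mul_apply (hT : ‖T‖ ≤ 1) (hsa : IsSelfAdjoint T) (x : H) :
    CauchySeq fun n => (T ^ (2 * n)) x := by
  have sq_antitone : Antitone fun n => ‖(T ^ (2 * n)) x‖ ^ 2 := fun i j hij =>
    pow_le_pow_left₀ (norm_nonneg _) (antitone_norm_pow_apply hT x (by lia)) 2
  have sq_cauchy : CauchySeq fun n => ‖(T ^ (2 * n)) x‖ ^ 2 :=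
    (tendsto_atTop_ciInf sq_antitone ⟨0, by rintro _ ⟨n, rfl⟩; positivity⟩).cauchySeq
  refine Metric.cauchySeq_iff'.2 fun ε hε => ?_
  obtain ⟨N, hN⟩ := Metric.cauchySeq_iff'.1 sq_cauchy (ε ^ 2) (by positivity)
  refine ⟨N, fun n hn => lt_of_pow_lt_pow_left₀ 2 hε.le ?_⟩
  rw [dist_eq_norm]
  calc ‖(T ^ (2 * n)) x - (T ^ (2 * N)) x‖ ^ 2
      ≤ ‖(T ^ (2 * N)) x‖ ^ 2 - ‖(T ^ (2 * n)) x‖ ^ 2 := norm_pow_two_mul_sub_sq_le hT hsa hn x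
    _ ≤ dist (‖(T ^ (2 * n)) x‖ ^ 2) (‖(T ^ (2 * N)) x‖ ^ 2) := by
      rw [dist_comm]; exact le_abs_self _
    _ < ε ^ 2 := hN n hn

theorem exists_tendsto_pow_apply (hT : ‖T‖ ≤ 1) (hsa : IsSelfAdjoint T)
    (hfix : ∀ y, T (T y) = y → T y = y) (x : H) :
    ∃ y, Tendsto (fun n => (T ^ n) x) atTop (𝓝 y) := by
  obtain ⟨y, hy⟩ := cauchySeq_tendsto_of_complete (cauchySeq_pow_two_mul_apply hT hsa x)
  have hTTy : T (T y) = y := by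
    refine tendsto_nhds_unique (((T ∘L T).continuous.tendsto y).comp hy) ?_
    refine (hy.comp (tendsto_add_atTop_nat 1)).congr fun n => ?_
    simp only [Function.comp_apply, mul_add, mul_one, add_comm _ 2, pow_add, pow_two]
    rfl
  have pow_fix (n : ℕ) : (T ^ n) y = y := by
    rw [FunLike.coe_pow_eq_iterate]
    exact Function.iterate_fixed (hfix y hTTy) n
  have dist_antitone : Antitone fun n => ‖(T ^ n) x - y‖ := by
    simpa only [map_sub, pow_fix] using antitone_norm_pow_apply hT (x - y)
  refine ⟨y, tendsto_iff_norm_sub_tendsto_zero.2 ?_⟩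
  exact (tendsto_iff_tendsto_subseq_of_antitone dist_antitone
    (tendsto_id.const_mul_atTop' two_pos)).2 (tendsto_iff_norm_sub_tendsto_zero.1 hy)

theorem tendsto_pow_apply_starProjection (hT : ‖T‖ ≤ 1) (hsa : IsSelfAdjoint T)
    (hfix : ∀ y, T (T y) = y → T y = y) (x : H) :
    Tendsto (fun n => (T ^ n) x) atTop
      (𝓝 ((T.eqLocus (1 : H →L[𝕜] H)).starProjection x)) := by
  let _ : NormedSpace ℝ H := NormedSpace.restrictScalars ℝ 𝕜 H
  obtain ⟨y, hy⟩ := exists_tendsto_pow_apply hT hsa hfix x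
  have birkhoff : Tendsto (birkhoffAverage 𝕜 T id · x) atTop (𝓝 y) := by
    refine hy.cesaro_smul.congr fun n => ?_
    simp only [FunLike.coe_pow_eq_iterate]
    rw [birkhoffAverage, birkhoffSum, ← RCLike.ofReal_natCast (K := 𝕜), ← RCLike.ofReal_inv]
    rfl
  rwa [Submodule.starProjection_apply,
    ← tendsto_nhds_unique birkhoff (T.tendsto_birkhoffAverage_orthogonalProjection hT x)]

end SelfAdjointContraction

theorem apply_adjoint_eq_of_norm_adjoint_eq {𝕜 E F : Type*} [RCLike 𝕜] [NormedAddCommGroup E]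
    [InnerProductSpace 𝕜 E] [CompleteSpace E] [NormedAddCommGroup F] [InnerProductSpace 𝕜 F]
    [CompleteSpace F] (V : E →ₗᵢ[𝕜] F) {u : F}
    (hu : ‖(V.toContinuousLinearMap†) u‖ = ‖u‖) : V ((V.toContinuousLinearMap†) u) = u := by
  refine eq_of_norm_le_re_inner_eq_norm_sq (𝕜 := 𝕜) (by rw [V.norm_map, hu]) ?_
  rw [← V.coe_toContinuousLinearMap, ← ContinuousLinearMap.adjoint_inner_right,
    inner_self_eq_norm_sq, hu]

section MarkovOperator

variable {X Y : Type*} [MeasurableSpace X] [MeasurableSpace Y]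

/-- Composition with the first projection, as an isometry from `L²(π)` into `L²(π ⊗ γ)`. -/
noncomputable def fstPullback (π : Measure X) (γ : Measure Y) [IsProbabilityMeasure γ] :
    Lp ℝ 2 π →ₗᵢ[ℝ] Lp ℝ 2 (π.prod γ) :=
  Lp.compMeasurePreservingₗᵢ ℝ Prod.fst measurePreserving_fst

variable {π : Measure X} {γ : Measure Y} [IsProbabilityMeasure γ]

/-- The Markov operator `φ ↦ ∫ φ (S (·, p)) dγ(p)` on `L²(π)` of the random map `S (·, p)`, `p ∼ γ`,
under which `π` is stationary. It is encoded as the composition with `S` followed by the adjoint of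
the composition with the first projection. -/
noncomputable def markovOp {S : X × Y → X} (hS : MeasurePreserving S (π.prod γ) π) :
    Lp ℝ 2 π →L[ℝ] Lp ℝ 2 π :=
  (fstPullback π γ).toContinuousLinearMap† ∘L
    (Lp.compMeasurePreservingₗᵢ ℝ S hS).toContinuousLinearMap

variable {S : X × Y → X} (hS : MeasurePreserving S (π.prod γ) π)

theorem norm_markovOp_le : ‖markovOp hS‖ ≤ 1 := by
  refine (ContinuousLinearMap.opNorm_comp_le _ _).trans (mul_le_one₀ ?_ (norm_nonneg _) ?_)
  · rw [LinearIsometryEquiv.norm_map]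
    exact LinearIsometry.norm_toContinuousLinearMap_le _
  · exact LinearIsometry.norm_toContinuousLinearMap_le _

theorem ae_ae_eq_markovOp_of_norm_eq {φ : Lp ℝ 2 π} (hφ : ‖markovOp hS φ‖ = ‖φ‖) :
    ∀ᵐ q ∂π, ∀ᵐ p ∂γ, φ (S (q, p)) = markovOp hS φ q := by
  have pullback_eq : fstPullback π γ (markovOp hS φ) = Lp.compMeasurePreserving S hS φ :=
    apply_adjoint_eq_of_norm_adjoint_eq (fstPullback π γ)
      (hφ.trans (Lp.norm_compMeasurePreserving φ hS).symm)
  refine Measure.ae_ae_of_ae_prod (p := fun z => φ (S z) = markovOp hS φ z.1) ?_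
  filter_upwards [Lp.coeFn_compMeasurePreserving (markovOp hS φ) measurePreserving_fst,
    Lp.coeFn_compMeasurePreserving φ hS] with z at_fst at_S
  exact at_S.symm.trans
    ((congrArg (fun u : Lp ℝ 2 (π.prod γ) => u z) pullback_eq.symm).trans at_fst)

variable [IsFiniteMeasure π]

theorem fstPullback_adjoint_ae_eq (u : Lp ℝ 2 (π.prod γ)) :
    ((fstPullback π γ).toContinuousLinearMap†) u =ᵐ[π] fun q => ∫ p, u (q, p) ∂γ := by
  have u_integrable : Integrable u (π.prod γ) := (Lp.memLp u).integrable one_le_two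
  refine Integrable.ae_eq_of_forall_setIntegral_eq _ _ ((Lp.memLp _).integrable one_le_two)
    u_integrable.integral_prod_left fun s hs s_lt_top => ?_
  calc ∫ q in s, ((fstPullback π γ).toContinuousLinearMap†) u q ∂π
      = ⟪fstPullback π γ (indicatorConstLp 2 hs s_lt_top.ne 1), u⟫_ℝ := by
        rw [← L2.inner_indicatorConstLp_one (𝕜 := ℝ) hs s_lt_top.ne,
          ContinuousLinearMap.adjoint_inner_right]
        rfl
    _ = ∫ z in Prod.fst ⁻¹' s, u z ∂π.prod γ :=
        L2.inner_indicatorConstLp_one (𝕜 := ℝ) (hs.preimage measurable_fst) (measure_ne_top _ _) u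
    _ = ∫ q in s, ∫ p, u (q, p) ∂γ ∂π := by
        rw [← Set.prod_univ, setIntegral_prod _ u_integrable.integrableOn, Measure.restrict_univ]

theorem markovOp_ae_eq (φ : Lp ℝ 2 π) :
    markovOp hS φ =ᵐ[π] fun q => ∫ p, φ (S (q, p)) ∂γ := by
  filter_upwards [fstPullback_adjoint_ae_eq (Lp.compMeasurePreserving S hS φ),
    Measure.ae_ae_of_ae_prod (Lp.coeFn_compMeasurePreserving φ hS)] with q adjoint_eq comp_eq
  exact adjoint_eq.trans (integral_congr_ae comp_eq)

theorem markovOp_const (c : ℝ) : markovOp hS (Lp.const 2 π c) = Lp.const 2 π c := by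
  have const_ae : ∀ᵐ q ∂π, Lp.const 2 π c q = c := Lp.coeFn_const ..
  refine Lp.ext ?_
  filter_upwards [markovOp_ae_eq hS (Lp.const 2 π c), const_ae,
    Measure.ae_ae_of_ae_prod (hS.quasiMeasurePreserving.ae const_ae)] with q op_eq at_q at_S
  rw [op_eq, integral_congr_ae at_S, at_q, integral_const, probReal_univ, one_smul]

theorem starProjection_span_const_one (φ : Lp ℝ 2 π) :
    (ℝ ∙ Lp.const 2 π (1 : ℝ)).starProjection φ = Lp.const 2 π (⨍ q, φ q ∂π) := by
  have inner_one : ⟪Lp.const 2 π (1 : ℝ), φ⟫_ℝ = ∫ q, φ q ∂π := by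
    rw [← indicatorConstLp_univ, L2.inner_indicatorConstLp_one, Measure.restrict_univ]
  have norm_one : ‖Lp.const 2 π (1 : ℝ)‖ ^ 2 = π.real Set.univ := by
    rw [← real_inner_self_eq_norm_sq, ← indicatorConstLp_univ,
      L2.inner_indicatorConstLp_one_indicatorConstLp_one, Set.univ_inter]
    rfl
  rw [Submodule.starProjection_singleton, inner_one, norm_one, average_eq]
  simpa [div_eq_inv_mul] using
    ((Lp.constL 2 π ℝ).map_smul ((∫ q, φ q ∂π) / π.real Set.univ) (1 : ℝ)).symm

variable {hS} (hcov : ∃ᵐ q ∂π, π ≪ γ.map fun p => S (q, p))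
include hcov

theorem exists_eq_const_of_norm_markovOp_eq {φ : Lp ℝ 2 π} (hφ : ‖markovOp hS φ‖ = ‖φ‖) :
    ∃ c, φ = Lp.const 2 π c := by
  obtain ⟨q, q_covers, fibre_eq⟩ :=
    (hcov.and_eventually (ae_ae_eq_markovOp_of_norm_eq hS hφ)).exists
  refine ⟨markovOp hS φ q, Lp.ext (.trans ?_ (Lp.coeFn_const ..).symm)⟩
  refine q_covers.ae_le ((ae_map_iff ?_ ?_).2 fibre_eq)
  · exact (hS.measurable.comp measurable_prodMk_left).aemeasurable
  · exact (Lp.stronglyMeasurable φ).measurable (measurableSet_singleton _)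

theorem markovOp_eq_self_of_norm_eq {φ : Lp ℝ 2 π} (hφ : ‖markovOp hS φ‖ = ‖φ‖) :
    markovOp hS φ = φ := by
  obtain ⟨c, rfl⟩ := exists_eq_const_of_norm_markovOp_eq hcov hφ
  exact markovOp_const hS c

theorem eqLocus_markovOp :
    (markovOp hS).eqLocus (1 : Lp ℝ 2 π →L[ℝ] Lp ℝ 2 π) = ℝ ∙ Lp.const 2 π (1 : ℝ) := by
  ext φ
  rw [Submodule.mem_span_singleton]
  constructor
  · intro hφ
    obtain ⟨c, rfl⟩ := exists_eq_const_of_norm_markovOp_eq hcov (congrArg norm hφ)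
    exact ⟨c, by simpa using ((Lp.constL 2 π ℝ).map_smul c (1 : ℝ)).symm⟩
  · rintro ⟨c, rfl⟩
    exact (map_smul ..).trans (congrArg (c • ·) (markovOp_const hS 1))

theorem tendsto_markovOp_pow_apply (hsa : IsSelfAdjoint (markovOp hS)) (φ : Lp ℝ 2 π) :
    Tendsto (fun n => (markovOp hS ^ n) φ) atTop (𝓝 (Lp.const 2 π (⨍ q, φ q ∂π))) := by
  have contraction (ψ : Lp ℝ 2 π) : ‖markovOp hS ψ‖ ≤ ‖ψ‖ := by
    simpa only [one_mul] using (markovOp hS).le_of_opNorm_le (norm_markovOp_le hS) ψ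
  have fix_of_fix_sq (ψ : Lp ℝ 2 π) (hψ : markovOp hS (markovOp hS ψ) = ψ) :
      markovOp hS ψ = ψ :=
    markovOp_eq_self_of_norm_eq hcov
      ((contraction ψ).antisymm ((congrArg norm hψ.symm).trans_le (contraction _)))
  have limit := tendsto_pow_apply_starProjection (norm_markovOp_le hS) hsa fix_of_fix_sq φ
  simpa only [eqLocus_markovOp hcov, starProjection_span_const_one] using limit

end MarkovOperator

section Density

variable {X Y : Type*} [MeasurableSpace X] [MeasurableSpace Y]

/-- The measure with density `f` with respect to `μ`; negative values of `f` count as `0`. -/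
noncomputable abbrev densityMeasure (μ : Measure X) (f : X → ℝ) : Measure X :=
  μ.withDensity fun x => ENNReal.ofReal (f x)

theorem isProbabilityMeasure_densityMeasure {μ : Measure X} {f : X → ℝ} (hf : 0 ≤ᵐ[μ] f)
    (hf_int : ∫ x, f x ∂μ = 1) : IsProbabilityMeasure (densityMeasure μ f) := by
  have f_integrable : Integrable f μ := .of_integral_ne_zero (hf_int ▸ one_ne_zero)
  refine ⟨?_⟩
  rw [withDensity_apply _ .univ, Measure.restrict_univ,
    ← ofReal_integral_eq_lintegral_ofReal f_integrable hf, hf_int, ENNReal.ofReal_one]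

theorem measurePreserving_withDensity {μ : Measure X} {ν : Measure Y} {T : X → Y}
    (hT : MeasurePreserving T μ ν) {ρ : Y → ENNReal} (hρ : Measurable ρ) :
    MeasurePreserving T (μ.withDensity (ρ ∘ T)) (ν.withDensity ρ) := by
  refine ⟨hT.measurable, Measure.ext fun s hs => ?_⟩
  rw [Measure.map_apply hT.measurable hs, withDensity_apply _ (hT.measurable hs),
    withDensity_apply _ hs]
  exact hT.setLIntegral_comp_preimage hs hρ

theorem measurePreserving_densityMeasure_prod {μ : Measure X} {ν : Measure Y} [SigmaFinite μ]
    [SigmaFinite ν] {f : X → ℝ} {g : Y → ℝ} (hf : Measurable f) (hg : Measurable g)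
    (hg_nonneg : ∀ p, 0 ≤ g p) {R : X × Y → X × Y}
    (hR : MeasurePreserving R (μ.prod ν) (μ.prod ν))
    (hinv : ∀ z, f (R z).1 * g (R z).2 = f z.1 * g z.2) :
    MeasurePreserving R ((densityMeasure μ f).prod (densityMeasure ν g))
      ((densityMeasure μ f).prod (densityMeasure ν g)) := by
  rw [prod_withDensity (by fun_prop) (by fun_prop)]
  simp only [← ENNReal.ofReal_mul' (hg_nonneg _)]
  convert! measurePreserving_withDensity hR (ρ := fun z => ENNReal.ofReal (f z.1 * g z.2))
    (by fun_prop) using 3 with z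
  exact congrArg ENNReal.ofReal (hinv z).symm

variable {μ : Measure X} {f : X → ℝ} (hf : Measurable f)
include hf

theorem integral_densityMeasure (hf_nonneg : 0 ≤ᵐ[μ] f) (u : X → ℝ) :
    ∫ x, u x ∂densityMeasure μ f = ∫ x, f x * u x ∂μ := by
  rw [integral_withDensity_eq_integral_toReal_smul (by fun_prop)
    (ae_of_all _ fun _ => ENNReal.ofReal_lt_top)]
  refine integral_congr_ae ?_
  filter_upwards [hf_nonneg] with x hx
  rw [ENNReal.toReal_ofReal hx, smul_eq_mul]

theorem integrable_densityMeasure_iff (hf_nonneg : 0 ≤ᵐ[μ] f) {u : X → ℝ} :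
    Integrable u (densityMeasure μ f) ↔ Integrable (fun x => f x * u x) μ := by
  rw [integrable_withDensity_iff (by fun_prop) (ae_of_all _ fun _ => ENNReal.ofReal_lt_top)]
  refine integrable_congr ?_
  filter_upwards [hf_nonneg] with x hx
  rw [ENNReal.toReal_ofReal hx, mul_comm]

variable (hf_pos : ∀ᵐ x ∂μ, 0 < f x)
include hf_pos

theorem ae_densityMeasure : ae (densityMeasure μ f) = ae μ := by
  refine le_antisymm (withDensity_absolutelyContinuous _ _).ae_le
    (withDensity_absolutelyContinuous' (by fun_prop) ?_).ae_le
  filter_upwards [hf_pos] with x hx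
  exact (ENNReal.ofReal_pos.2 hx).ne'

theorem inner_densityMeasure_eq_integral {k₁ k₂ : X → ℝ} {φ₁ φ₂ : Lp ℝ 2 (densityMeasure μ f)}
    (hk₁ : k₁ =ᵐ[μ] f * φ₁) (hk₂ : k₂ =ᵐ[μ] f * φ₂) :
    ⟪φ₁, φ₂⟫_ℝ = ∫ x, k₁ x * k₂ x / f x ∂μ := by
  rw [L2.inner_def, integral_densityMeasure hf (hf_pos.mono fun _ => le_of_lt)]
  refine integral_congr_ae ?_
  filter_upwards [hf_pos, hk₁, hk₂] with x hx h₁ h₂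
  simp only [h₁, h₂, Pi.mul_apply, RCLike.inner_apply, conj_trivial]
  field_simp

theorem norm_sq_eq_integral_sq_div {k : X → ℝ} {φ : Lp ℝ 2 (densityMeasure μ f)}
    (hk : k =ᵐ[μ] f * φ) : ‖φ‖ ^ 2 = ∫ x, k x ^ 2 / f x ∂μ := by
  simpa only [real_inner_self_eq_norm_sq, ← pow_two] using
    inner_densityMeasure_eq_integral hf hf_pos hk hk

theorem integrable_sq_div {k : X → ℝ} {φ : Lp ℝ 2 (densityMeasure μ f)}
    (hk : k =ᵐ[μ] f * φ) : Integrable (fun x => k x ^ 2 / f x) μ := by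
  refine ((integrable_densityMeasure_iff hf (hf_pos.mono fun _ => le_of_lt)).1
    (Lp.memLp φ).integrable_sq).congr ?_
  filter_upwards [hf_pos, hk] with x hx h
  rw [h, Pi.mul_apply]
  field_simp

theorem exists_ae_eq_mul_Lp {k : X → ℝ} (hk : Measurable k)
    (hk_int : Integrable (fun x => k x ^ 2 / f x) μ) :
    ∃ φ : Lp ℝ 2 (densityMeasure μ f), k =ᵐ[μ] f * φ := by
  have ratio_memLp : MemLp (fun x => k x / f x) 2 (densityMeasure μ f) := by
    rw [memLp_two_iff_integrable_sq (by exact (hk.div hf).aestronglyMeasurable),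
      integrable_densityMeasure_iff hf (hf_pos.mono fun _ => le_of_lt)]
    refine hk_int.congr ?_
    filter_upwards [hf_pos] with x hx
    field_simp
  have ratio_eq := ratio_memLp.coeFn_toLp
  rw [EventuallyEq, ae_densityMeasure hf hf_pos] at ratio_eq
  refine ⟨ratio_memLp.toLp, ?_⟩
  filter_upwards [hf_pos, ratio_eq] with x hx h
  rw [Pi.mul_apply, h]
  field_simp

theorem average_densityMeasure {k : X → ℝ} {φ : Lp ℝ 2 (densityMeasure μ f)}
    (hk : k =ᵐ[μ] f * φ) :
    ⨍ x, φ x ∂densityMeasure μ f = (∫ x, k x ∂μ) / ∫ x, f x ∂μ := by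
  have integral_eq := integral_densityMeasure hf (hf_pos.mono fun _ => le_of_lt)
  have mass_eq : (densityMeasure μ f).real Set.univ = ∫ x, f x ∂μ := by
    simpa using integral_eq fun _ => 1
  rw [average_eq, mass_eq, integral_eq, integral_congr_ae hk, smul_eq_mul, inv_mul_eq_div]
  rfl

theorem sub_const_mul_ae_eq [IsFiniteMeasure (densityMeasure μ f)] {k : X → ℝ}
    {φ : Lp ℝ 2 (densityMeasure μ f)} (hk : k =ᵐ[μ] f * φ) (c : ℝ) :
    (fun x => k x - c * f x) =ᵐ[μ] f * ⇑(φ - Lp.const 2 (densityMeasure μ f) c) := by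
  have sub_eq := (Lp.coeFn_sub φ (Lp.const 2 _ c)).trans
    (EventuallyEq.rfl.sub (Lp.coeFn_const (p := 2) (μ := densityMeasure μ f) c))
  rw [EventuallyEq, ae_densityMeasure hf hf_pos] at sub_eq
  filter_upwards [hk, sub_eq] with x h h_sub
  simp only [h, h_sub, Pi.mul_apply, Pi.sub_apply, Function.const_apply]
  ring

end Density

section HMC

variable {X Y : Type*} [MeasurableSpace X] [MeasurableSpace Y]

/-- The HMC operator `hmcOp` for arbitrary position and momentum spaces, the momenta being
integrated against `ν`. -/
noncomputable def hmcOperator (ν : Measure Y) (g : Y → ℝ) (R : X × Y → X × Y) (h : X → ℝ) :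
    X → ℝ :=
  fun q => ∫ p, h (R (q, p)).1 * g (R (q, p)).2 ∂ν

variable {μ : Measure X} {ν : Measure Y} [SigmaFinite ν]
  {f : X → ℝ} {g : Y → ℝ} {R : X × Y → X × Y}
  (hf : Measurable f) (hf_pos : ∀ᵐ q ∂μ, 0 < f q) (hg : Measurable g) (hg_nonneg : ∀ p, 0 ≤ g p)
  (hR : MeasurePreserving R (μ.prod ν) (μ.prod ν))
  (hinv : ∀ z, f (R z).1 * g (R z).2 = f z.1 * g z.2)
  [IsFiniteMeasure (densityMeasure μ f)] [IsProbabilityMeasure (densityMeasure ν g)]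
  {hS : MeasurePreserving (fun z => (R z).1) ((densityMeasure μ f).prod (densityMeasure ν g))
    (densityMeasure μ f)}
include hf hf_pos hg hg_nonneg hR hinv

theorem hmcOperator_ae_eq {k : X → ℝ} {φ : Lp ℝ 2 (densityMeasure μ f)} (hk : k =ᵐ[μ] f * φ) :
    hmcOperator ν g R k =ᵐ[μ] f * markovOp hS φ := by
  have hk_R : ∀ᵐ z ∂μ.prod ν, k (R z).1 = f (R z).1 * φ (R z).1 :=
    (Measure.quasiMeasurePreserving_fst.comp hR.quasiMeasurePreserving).ae hk
  have markovOp_eq := markovOp_ae_eq hS φ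
  rw [EventuallyEq, ae_densityMeasure hf hf_pos] at markovOp_eq
  filter_upwards [markovOp_eq, Measure.ae_ae_of_ae_prod hk_R] with q hq hk_q
  calc hmcOperator ν g R k q
      = ∫ p, f q * (g p * φ (R (q, p)).1) ∂ν := by
        refine integral_congr_ae ?_
        filter_upwards [hk_q] with p hp
        rw [hp, mul_right_comm, hinv, mul_assoc]
    _ = f q * ∫ p, φ (R (q, p)).1 ∂densityMeasure ν g := by
        rw [integral_const_mul, integral_densityMeasure hg (ae_of_all _ hg_nonneg)]
    _ = (f * ⇑(markovOp hS φ)) q := by rw [Pi.mul_apply, hq]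

theorem hmcOperator_iterate_ae_eq {k : X → ℝ} {φ : Lp ℝ 2 (densityMeasure μ f)}
    (hk : k =ᵐ[μ] f * φ) (n : ℕ) :
    (hmcOperator ν g R)^[n] k =ᵐ[μ] f * ((markovOp hS ^ n) φ : Lp ℝ 2 (densityMeasure μ f)) := by
  induction n with
  | zero => exact hk
  | succ n ih =>
    rw [Function.iterate_succ_apply', pow_succ', mul_apply_eq_comp]
    exact hmcOperator_ae_eq hf hf_pos hg hg_nonneg hR hinv ih

theorem isSelfAdjoint_markovOp
    (hselfadj : ∀ h₁ h₂ : X → ℝ, Measurable h₁ → Measurable h₂ →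
      Integrable (fun q => h₁ q ^ 2 / f q) μ → Integrable (fun q => h₂ q ^ 2 / f q) μ →
      ∫ q, hmcOperator ν g R h₁ q * h₂ q / f q ∂μ = ∫ q, h₁ q * hmcOperator ν g R h₂ q / f q ∂μ) :
    IsSelfAdjoint (markovOp hS) := by
  rw [ContinuousLinearMap.isSelfAdjoint_iff_isSymmetric]
  intro φ ψ
  have measurable_mul (χ : Lp ℝ 2 (densityMeasure μ f)) : Measurable (f * ⇑χ) :=
    hf.mul (Lp.stronglyMeasurable χ).measurable
  have op_ae_eq (χ : Lp ℝ 2 (densityMeasure μ f)) :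
      hmcOperator ν g R (f * ⇑χ) =ᵐ[μ] f * ⇑(markovOp hS χ) :=
    hmcOperator_ae_eq hf hf_pos hg hg_nonneg hR hinv .rfl
  calc ⟪markovOp hS φ, ψ⟫_ℝ
      = ∫ q, hmcOperator ν g R (f * ⇑φ) q * (f * ⇑ψ) q / f q ∂μ :=
        inner_densityMeasure_eq_integral hf hf_pos (op_ae_eq φ) .rfl
    _ = ∫ q, (f * ⇑φ) q * hmcOperator ν g R (f * ⇑ψ) q / f q ∂μ :=
        hselfadj _ _ (measurable_mul φ) (measurable_mul ψ)
          (integrable_sq_div hf hf_pos .rfl) (integrable_sq_div hf hf_pos .rfl)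
    _ = ⟪φ, markovOp hS ψ⟫_ℝ :=
        (inner_densityMeasure_eq_integral hf hf_pos .rfl (op_ae_eq ψ)).symm

end HMC

theorem hmc_iterates_converge_strongly_general {X Y : Type*} [MeasurableSpace X]
    [MeasurableSpace Y] {μ : Measure X} {ν : Measure Y} [SigmaFinite μ] [SigmaFinite ν]
    {f : X → ℝ} {g : Y → ℝ} (hf_meas : Measurable f) (hf_pos : ∀ᵐ q ∂μ, 0 < f q)
    (hf_int : Integrable f μ) (hg_meas : Measurable g) (hg_nonneg : ∀ p, 0 ≤ g p)
    (hg_int : ∫ p, g p ∂ν = 1) {R : X × Y → X × Y}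
    (hR : MeasurePreserving R (μ.prod ν) (μ.prod ν))
    (hinv : ∀ z, f (R z).1 * g (R z).2 = f z.1 * g z.2)
    (hcov : ∃ᵐ q ∂μ, μ ≪ (densityMeasure ν g).map fun p => (R (q, p)).1)
    (hselfadj : ∀ h₁ h₂ : X → ℝ, Measurable h₁ → Measurable h₂ →
      Integrable (fun q => h₁ q ^ 2 / f q) μ → Integrable (fun q => h₂ q ^ 2 / f q) μ →
      ∫ q, hmcOperator ν g R h₁ q * h₂ q / f q ∂μ = ∫ q, h₁ q * hmcOperator ν g R h₂ q / f q ∂μ)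
    {h : X → ℝ} (hh_meas : Measurable h) (hh_L2 : Integrable (fun q => h q ^ 2 / f q) μ) :
    Tendsto
      (fun n => ∫ q,
        ((hmcOperator ν g R)^[n] h q - (∫ x, h x ∂μ) / (∫ x, f x ∂μ) * f q) ^ 2 / f q ∂μ)
      atTop (𝓝 0) := by
  have := isFiniteMeasure_withDensity_ofReal hf_int.2
  have := isProbabilityMeasure_densityMeasure (ae_of_all ν hg_nonneg) hg_int
  have hS := measurePreserving_fst.comp
    (measurePreserving_densityMeasure_prod hf_meas hg_meas hg_nonneg hR hinv)
  have hcov_density : ∃ᵐ q ∂densityMeasure μ f,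
      densityMeasure μ f ≪ (densityMeasure ν g).map fun p => (R (q, p)).1 := by
    rw [ae_densityMeasure hf_meas hf_pos]
    exact hcov.mono fun q hq => (withDensity_absolutelyContinuous _ _).trans hq
  obtain ⟨φ, hφ⟩ := exists_ae_eq_mul_Lp hf_meas hf_pos hh_meas hh_L2
  have limit := tendsto_markovOp_pow_apply hcov_density
    (isSelfAdjoint_markovOp (hS := hS) hf_meas hf_pos hg_meas hg_nonneg hR hinv hselfadj) φ
  have sq_norm_limit := (tendsto_iff_norm_sub_tendsto_zero.1 limit).pow 2
  rw [zero_pow two_ne_zero, average_densityMeasure hf_meas hf_pos hφ] at sq_norm_limit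
  refine sq_norm_limit.congr fun n => ?_
  exact norm_sq_eq_integral_sq_div hf_meas hf_pos (sub_const_mul_ae_eq hf_meas hf_pos
    (hmcOperator_iterate_ae_eq hf_meas hf_pos hg_meas hg_nonneg hR hinv hφ n) _)

/-- If the HMC operator is in addition self-adjoint for the weighted inner
product `⟨h₁,h₂⟩ = ∫ h₁ h₂ / f`, then its iterates converge strongly in weighted `L²` to
`α f` with `α = (∫ h) / (∫ f)`. -/
theorem hmc_iterates_converge_strongly
    (m : ℕ) (hm : 1 ≤ m)
    (f g : EuclideanSpace ℝ (Fin m) → ℝ)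
    (hf_meas : Measurable f)
    (hf_pos : ∀ᵐ q : EuclideanSpace ℝ (Fin m), 0 < f q)
    (hf_int : Integrable f)
    (hf_int_pos : 0 < ∫ q, f q)
    (hg_meas : Measurable g)
    (hg_nonneg : ∀ p, 0 ≤ g p)
    (hg_int : (∫ p, g p) = 1)
    (R : EuclideanSpace ℝ (Fin m) × EuclideanSpace ℝ (Fin m) →
         EuclideanSpace ℝ (Fin m) × EuclideanSpace ℝ (Fin m))
    (hR_bij : Function.Bijective R)
    (hR_mp : MeasurePreserving R volume volume)
    (hinv : ∀ q p : EuclideanSpace ℝ (Fin m),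
      f (R (q, p)).1 * g (R (q, p)).2 = f q * g p)
    -- Coverage property:
    (hcov : ∀ᵐ q : EuclideanSpace ℝ (Fin m),
      (Measure.map (fun p => (R (q, p)).1)
          (volume.withDensity fun p => ENNReal.ofReal (g p))) ≪ volume ∧
      volume ≪ (Measure.map (fun p => (R (q, p)).1)
          (volume.withDensity fun p => ENNReal.ofReal (g p))))
    -- Self-adjointness with respect to the weighted inner product:
    (hselfadj : ∀ h₁ h₂ : EuclideanSpace ℝ (Fin m) → ℝ,
      Measurable h₁ → Measurable h₂ →
      Integrable (fun q => h₁ q ^ 2 / f q) → Integrable (fun q => h₂ q ^ 2 / f q) →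
      (∫ q, hmcOp m g R h₁ q * h₂ q / f q) = ∫ q, h₁ q * hmcOp m g R h₂ q / f q)
    (h : EuclideanSpace ℝ (Fin m) → ℝ) (hh_meas : Measurable h)
    (hh_L2 : Integrable (fun q => h q ^ 2 / f q)) :
    Tendsto
      (fun n => ∫ q,
        ((hmcOp m g R)^[n] h q - ((∫ x, h x) / (∫ x, f x)) * f q) ^ 2 / f q)
      atTop (nhds 0) := by
  exact hmc_iterates_converge_strongly_general hf_meas hf_pos hf_int hg_meas hg_nonneg hg_int hR_mp
    (fun z => hinv z.1 z.2) (hcov.mono fun _ => And.right).frequently hselfadj hh_meas hh_L2
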